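/- For any generating function g, any witness function t, any sets 𝒫_g and 𝒫_t of p-conditions, and any disjunctive logic program Π, the two-layer template graph ST[𝒫_g, 𝒫_t, g, t](Π) is finite and acyclic. -/

import Mathlib

set_option linter.unusedVariables false
open scoped Classical

namespace AbstractSolvers

/-- Literals over atoms (natural numbers): an atom `a` or its negation `¬ a`. -/
inductive Lit where
  | pos : ℕ → Lit
  | neg : ℕ → Lit
deriving DecidableEq

/-- The complement of a literal. -/
def Lit.comp : Lit → Lit
  | .pos a => .neg a
  | .neg a => .pos a

/-- The atom of a literal. -/
def Lit.atom : Lit → ℕ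
  | .pos a => a
  | .neg a => a

def Lit.isPos : Lit → Bool
  | .pos _ => true
  | .neg _ => false

/-- A disjunctive rule `A ← B`: a head `A` (disjunction of atoms) and a body with a
positive part (atoms) and a negative part (atoms under negation as failure). -/
structure Rule where
  head : Finset ℕ
  pos : Finset ℕ
  neg : Finset ℕ
deriving DecidableEq

/-- A disjunctive logic program: a finite set of disjunctive rules. -/
abbrev Prog := Finset Rule

def Rule.atoms (r : Rule) : Finset ℕ := r.head ∪ r.pos ∪ r.neg

/-- The atoms occurring in a program. -/
def progAtoms (π : Prog) : Finset ℕ := π.sup Rule.atoms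

/-- The atoms occurring in a set of literals. -/
def atomsOfSet (M : Set Lit) : Set ℕ := Lit.atom '' M

/-- A set of literals is consistent if it contains no literal together with its complement. -/
def consistentSet (M : Set Lit) : Prop := ∀ l ∈ M, Lit.comp l ∉ M

/-- `M⁺`: the atoms occurring positively in `M`. -/
def posAtoms (M : Set Lit) : Set ℕ := {a | Lit.pos a ∈ M}

/-- The restriction of a set of literals to a set of atoms. -/
def restrictTo (M : Set Lit) (X : Set ℕ) : Set Lit := {l | l ∈ M ∧ Lit.atom l ∈ X}

/-- `M` is a complete set of literals over `X` if the atoms of `M` are exactly `X`. -/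
def completeOver (M : Set Lit) (X : Set ℕ) : Prop := atomsOfSet M = X

/-- The clause `A ∨ B̄` corresponding to a rule `A ← B` (as its set of literals). -/
def Rule.clause (r : Rule) : Set Lit :=
  (Lit.pos '' ↑r.head) ∪ (Lit.neg '' ↑r.pos) ∪ (Lit.pos '' ↑r.neg)

/-- `M` satisfies the rule `r` viewed as a clause. -/
def satRule (M : Set Lit) (r : Rule) : Prop := ∃ l ∈ Rule.clause r, l ∈ M

/-- A classical model of a program: a consistent and complete set of literals over the atoms
of the program satisfying every rule viewed as a clause. -/
def claModel (π : Prog) (M : Set Lit) : Prop :=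
  consistentSet M ∧ completeOver M ↑(progAtoms π) ∧ ∀ r ∈ π, satRule M r

/-- `r` (of the form `A ∨ a ← B`) is a supporting rule for `a` with respect to `M`
when `M ∩ (B̄ ∪ A) = ∅`. -/
def supportingRule (r : Rule) (a : ℕ) (M : Set Lit) : Prop :=
  a ∈ r.head ∧ (∀ b ∈ r.pos, Lit.neg b ∉ M) ∧ (∀ b ∈ r.neg, Lit.pos b ∉ M) ∧
    ∀ b ∈ r.head, b ≠ a → Lit.pos b ∉ M

/-- A supported model of a program. -/
def supModel (π : Prog) (M : Set Lit) : Prop :=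
  claModel π M ∧ ∀ a, Lit.pos a ∈ M → ∃ r ∈ π, supportingRule r a M

/-- `X` satisfies the reduct `π^Y`. -/
def satReduct (π : Prog) (Y X : Set ℕ) : Prop :=
  ∀ r ∈ π, (∀ b ∈ r.neg, b ∉ Y) → (∀ b ∈ r.pos, b ∈ X) → ∃ a ∈ r.head, a ∈ X

/-- `X` is an answer set of `π`: `X` is minimal among the sets of atoms satisfying `π^X`. -/
def answerSet (π : Prog) (X : Set ℕ) : Prop :=
  satReduct π X X ∧ ∀ Y ⊆ X, satReduct π X Y → Y = X

/-- A stable model of a program: a consistent and complete set `M` of literals over the atoms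
of the program such that `M⁺` is an answer set. -/
def staModel (π : Prog) (M : Set Lit) : Prop :=
  consistentSet M ∧ completeOver M ↑(progAtoms π) ∧ answerSet π (posAtoms M)

/-- `X` is unfounded on `L` with respect to `π`. -/
def unfounded (π : Prog) (L : Set Lit) (X : Set ℕ) : Prop :=
  ∀ a ∈ X, ∀ r ∈ π, a ∈ r.head →
    ((∃ b ∈ r.pos, Lit.neg b ∈ L) ∨ (∃ b ∈ r.neg, Lit.pos b ∈ L)) ∨
    (∃ b ∈ r.pos, b ∈ X) ∨
    (∃ b ∈ r.head, b ∉ X ∧ Lit.pos b ∈ L)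

/-- The three types of models: classical, supported-, and stable. -/
inductive MType where
  | cla | sup | sta

/-- `w`-models. -/
def isModel : MType → Prog → Set Lit → Prop
  | .cla => claModel
  | .sup => supModel
  | .sta => staModel

/-- A propagator condition (`p-condition`) maps a program and a set of literals to a set of
literals. -/
abbrev PCond := Prog → Set Lit → Set Lit

/-- A p-condition yields literals over the atoms of the program. -/
def isPCondition (p : PCond) : Prop :=
  ∀ (π : Prog) (M : Set Lit), ∀ l ∈ p π M, Lit.atom l ∈ progAtoms π

/-- The union of the outcomes of a set of p-conditions. -/
def pcOut (P : Set PCond) (π : Prog) (M : Set Lit) : Set Lit := ⋃ p ∈ P, p π M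

/-- The `UnitPropagate` p-condition. -/
def unitPropagate : PCond := fun π L =>
  {l | l ∉ L ∧ ∃ r ∈ π, l ∈ Rule.clause r ∧ ∀ l' ∈ Rule.clause r, l' ≠ l → Lit.comp l' ∈ L}

/-- The `AllRulesCancelled` p-condition. -/
def allRulesCancelled : PCond := fun π L =>
  {l | ∃ a, l = Lit.neg a ∧ Lit.neg a ∉ L ∧ ∀ r ∈ π, ¬ supportingRule r a L}

/-- The `BackchainTrue` p-condition. -/
def backchainTrue : PCond := fun π L =>
  {l | l ∉ L ∧ ∃ r ∈ π, ∃ a ∈ r.head, Lit.pos a ∈ L ∧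
    ((∃ b ∈ r.head, b ≠ a ∧ l = Lit.neg b) ∨ (∃ b ∈ r.pos, l = Lit.pos b) ∨
      (∃ b ∈ r.neg, l = Lit.neg b)) ∧
    ∀ r' ∈ π, r' ≠ r → ¬ supportingRule r' a L}

/-- The `Unfounded` p-condition. -/
def unfoundedCond : PCond := fun π L =>
  {l | ∃ a, l = Lit.neg a ∧ Lit.neg a ∉ L ∧ consistentSet L ∧
    ∃ X : Set ℕ, a ∈ X ∧ unfounded π L X}

/-- `up = {UnitPropagate}`. -/
def up : Set PCond := {unitPropagate}

/-- `sd = {UnitPropagate, AllRulesCancelled, BackchainTrue}`. -/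
def sd : Set PCond := {unitPropagate, allRulesCancelled, backchainTrue}

/-- `sm = {UnitPropagate, AllRulesCancelled, BackchainTrue, Unfounded}`. -/
def sm : Set PCond := {unitPropagate, allRulesCancelled, backchainTrue, unfoundedCond}

/-- `P` is `w`-sound. -/
def wSound (w : MType) (P : Set PCond) : Prop :=
  ∀ (π : Prog) (M M₁ : Set Lit), isModel w π M₁ → M ⊆ M₁ → pcOut P π M ⊆ M₁

/-- `P` is `w`-complete. -/
def wComplete (w : MType) (P : Set PCond) : Prop :=
  ∀ (π : Prog) (M : Set Lit), consistentSet M → completeOver M ↑(progAtoms π) →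
    (isModel w π M ↔ pcOut P π M = ∅)

/-- `P` is `w`-enforcing: both `w`-sound and `w`-complete. -/
def wEnforcing (w : MType) (P : Set PCond) : Prop := wSound w P ∧ wComplete w P

abbrev GenFun := Prog → Prog
abbrev WitFun := Prog → Set Lit → Prog

/-- `M` covers `π` when `atoms(π) ⊆ atoms(M)`. -/
def covers (M : Set Lit) (π : Prog) : Prop := (↑(progAtoms π) : Set ℕ) ⊆ atomsOfSet M

/-- A generating (program) function. -/
def isGenFun (g : GenFun) : Prop :=
  ∀ π : Prog, (↑(progAtoms π) : Set ℕ) ⊆ (↑(progAtoms (g π)) : Set ℕ)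

/-- A witness (program) function: on consistent covering sets of literals it yields
a non-disjunctive program. -/
def isWitFun (t : WitFun) : Prop :=
  ∀ (π : Prog) (M : Set Lit), consistentSet M → covers M π → ∀ r ∈ t π M, r.head.card ≤ 1

/-- `g` is `w₁`-approximating with respect to `w`. -/
def approximating (w₁ w : MType) (g : GenFun) : Prop :=
  ∀ π : Prog,
    (∀ L, staModel π L → ∃ L₁, isModel w₁ (g π) L₁ ∧ L = restrictTo L₁ ↑(progAtoms π)) ∧
    (∀ M, isModel w₁ (g π) M → isModel w π (restrictTo M ↑(progAtoms π)))

/-- `t` is `w₁`-ensuring with respect to `w`. -/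
def ensuring (w₁ w : MType) (t : WitFun) : Prop :=
  ∀ (π : Prog) (M : Set Lit), covers M π →
    isModel w π (restrictTo M ↑(progAtoms π)) →
    (staModel π (restrictTo M ↑(progAtoms π)) ↔ ¬ ∃ N, isModel w₁ (t π M) N)

/-- `(P, g)` is an approximating-pair with respect to `w`. -/
def approximatingPair (w : MType) (P : Set PCond) (g : GenFun) : Prop :=
  ∃ w₁, wEnforcing w₁ P ∧ approximating w₁ w g

/-- `(P, t)` is an ensuring-pair with respect to `w`. -/
def ensuringPair (w : MType) (P : Set PCond) (t : WitFun) : Prop :=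
  ∃ w₁, wEnforcing w₁ P ∧ ensuring w₁ w t

/-- An element of a record: a literal annotated as decision (`true`) or not, or `⊥`. -/
inductive RElem where
  | lit : Lit → Bool → RElem
  | bot : RElem
deriving DecidableEq

/-- A record is a string (list) of such elements. -/
abbrev Record := List RElem

def RElem.content : RElem → Option Lit
  | .lit l _ => some l
  | .bot => none

/-- The literal `l` occurs in the record `L` (possibly as a decision literal). -/
def Record.hasLit (L : Record) (l : Lit) : Prop := ∃ d, RElem.lit l d ∈ L

/-- The set of literals of a record. -/
def Record.lits (L : Record) : Set Lit := {l | Record.hasLit L l}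

/-- A record is inconsistent if it contains `⊥` or complementary literals. -/
def Record.incons (L : Record) : Prop :=
  RElem.bot ∈ L ∨ ∃ l, Record.hasLit L l ∧ Record.hasLit L (Lit.comp l)

/-- The record contains no decision literals. -/
def Record.noDec (L : Record) : Prop := ∀ l, RElem.lit l true ∉ L

/-- A record relative to the set `X` of atoms: no repetitions, and all literals over `X`. -/
def Record.wf (L : Record) (X : Set ℕ) : Prop :=
  (L.map RElem.content).Nodup ∧ ∀ l, Record.hasLit L l → Lit.atom l ∈ X

/-- An abstract transition graph, with a distinguished initial node, a `Failstate`,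
and `Ok(L)` nodes. -/
structure AbsGraph (σ : Type) where
  nodes : Set σ
  step : σ → σ → Prop
  init : σ
  fail : σ
  okP : σ → Prop
  okLits : σ → Set Lit

/-- The edges of the graph: steps between nodes of the graph. -/
def AbsGraph.edge {σ : Type} (G : AbsGraph σ) (s s' : σ) : Prop :=
  s ∈ G.nodes ∧ s' ∈ G.nodes ∧ G.step s s'

/-- The atoms of a family of sets of literals. -/
def atomsOfFam (N : Set (Set Lit)) : Set ℕ := ⋃ M ∈ N, atomsOfSet M

/-- The graph `G` checks the set `N` of sets of literals. -/
def checks {σ : Type} (G : AbsGraph σ) (N : Set (Set Lit)) : Prop :=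
  G.nodes.Finite ∧
  (∀ s : σ, ¬ Relation.TransGen G.edge s s) ∧
  (∀ s ∈ G.nodes, (∀ s', ¬ G.edge s s') → s = G.fail ∨ G.okP s) ∧
  (∀ s : σ, Relation.ReflTransGen G.edge G.init s → G.okP s →
    restrictTo (G.okLits s) (atomsOfFam N) ∈ N) ∧
  (Relation.ReflTransGen G.edge G.init G.fail ↔ N = ∅)

/-- Applicability of the `Conclude` rule. -/
def concludeApp (L : Record) : Prop := Record.incons L ∧ Record.noDec L

/-- Applicability of the `Backtrack` rule. -/
def backtrackApp (L : Record) : Prop :=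
  ∃ L₁ l L₂, L = L₁ ++ RElem.lit l true :: L₂ ∧ Record.incons L ∧ Record.noDec L₂

/-- Applicability of the `Propagate` rule for the set `P` of p-conditions. -/
def propagateApp (P : Set PCond) (π : Prog) (L : Record) : Prop :=
  ∃ l, l ∈ pcOut P π (Record.lits L)

/-- Applicability of the `Decide` rule over the atoms `X`. -/
def decideApp (X : Finset ℕ) (L : Record) : Prop :=
  ¬ Record.incons L ∧ ∃ l : Lit, Lit.atom l ∈ X ∧ ¬ Record.hasLit L l ∧
    ¬ Record.hasLit L (Lit.comp l)

/-- Basic states: records, `Ok(L)` states, and the `Failstate`. -/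
inductive BState where
  | rcd : Record → BState
  | ok : Record → BState
  | fail : BState

/-- The transition rules of the single-layer DPLL graph template `DPT_P(π)`
(`Conclude`, `Backtrack`, `Propagate`, `Decide`, `Success`). -/
inductive dptStep (P : Set PCond) (π : Prog) : BState → BState → Prop
  | conclude (L : Record) : Record.incons L → Record.noDec L →
      dptStep P π (BState.rcd L) BState.fail
  | backtrack (L₁ : Record) (l : Lit) (L₂ : Record) :
      Record.incons (L₁ ++ RElem.lit l true :: L₂) → Record.noDec L₂ →
      dptStep P π (BState.rcd (L₁ ++ RElem.lit l true :: L₂))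
        (BState.rcd (L₁ ++ [RElem.lit (Lit.comp l) false]))
  | propagate (L : Record) (l : Lit) : l ∈ pcOut P π (Record.lits L) →
      dptStep P π (BState.rcd L) (BState.rcd (L ++ [RElem.lit l false]))
  | decide (L : Record) (l : Lit) : ¬ Record.incons L → Lit.atom l ∈ progAtoms π →
      ¬ Record.hasLit L l → ¬ Record.hasLit L (Lit.comp l) →
      dptStep P π (BState.rcd L) (BState.rcd (L ++ [RElem.lit l true]))
  | success (L : Record) :
      ¬ (concludeApp L ∨ backtrackApp L ∨ propagateApp P π L ∨ decideApp (progAtoms π) L) →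
      dptStep P π (BState.rcd L) (BState.ok L)

/-- The single-layer DPLL graph template `DPT_P(π)`; with `P = up` it is the graph `DP_π`. -/
def DPT (P : Set PCond) (π : Prog) : AbsGraph BState where
  nodes := {s | match s with
    | BState.rcd L => Record.wf L ↑(progAtoms π)
    | BState.ok L => Record.wf L ↑(progAtoms π)
    | BState.fail => True}
  step := dptStep P π
  init := BState.rcd []
  fail := BState.fail
  okP := fun s => ∃ L, s = BState.ok L
  okLits := fun s => match s with
    | BState.ok L => Record.lits L
    | BState.rcd L => Record.lits L
    | BState.fail => ∅

/-- States of the two-layer graph: `(L,R)_s` (label `true` = 𝓛, `false` = 𝓡),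
`Ok(L)`, and `Failstate`. -/
inductive TLState where
  | st : Record → Record → Bool → TLState
  | ok : Record → TLState
  | fail : TLState

/-- `atoms(t, π, X)`: the union of the atoms of `t(π,L)` over all consistent and complete
sets `L` of literals over `X`. -/
def witAtoms (t : WitFun) (π : Prog) (X : Set ℕ) : Set ℕ :=
  ⋃ L ∈ {L : Set Lit | consistentSet L ∧ completeOver L X}, (↑(progAtoms (t π L)) : Set ℕ)

/-- Some left-rule applies to the state `(L, ∅)_𝓛`. -/
def leftApp (P : Set PCond) (gπ : Prog) (L : Record) : Prop :=
  concludeApp L ∨ backtrackApp L ∨ propagateApp P gπ L ∨ decideApp (progAtoms gπ) L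

/-- Some right-rule applies to the state `(L, R)_𝓡` (where `tπ` is the witness program
for `L`). -/
def rightApp (P : Set PCond) (tπ : Prog) (R : Record) : Prop :=
  concludeApp R ∨ backtrackApp R ∨ propagateApp P tπ R ∨ decideApp (progAtoms tπ) R

/-- The transition rules of the two-layer template graph `ST[PL, PR, g, t](π)`. -/
inductive tlStep (PL PR : Set PCond) (g : GenFun) (t : WitFun) (π : Prog) :
    TLState → TLState → Prop
  | concludeL (L : Record) : Record.incons L → Record.noDec L →
      tlStep PL PR g t π (TLState.st L [] true) TLState.fail
  | backtrackL (L₁ : Record) (l : Lit) (L₂ : Record) :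
      Record.incons (L₁ ++ RElem.lit l true :: L₂) → Record.noDec L₂ →
      tlStep PL PR g t π (TLState.st (L₁ ++ RElem.lit l true :: L₂) [] true)
        (TLState.st (L₁ ++ [RElem.lit (Lit.comp l) false]) [] true)
  | propagateL (L : Record) (l : Lit) : l ∈ pcOut PL (g π) (Record.lits L) →
      tlStep PL PR g t π (TLState.st L [] true)
        (TLState.st (L ++ [RElem.lit l false]) [] true)
  | decideL (L : Record) (l : Lit) : ¬ Record.incons L → Lit.atom l ∈ progAtoms (g π) →
      ¬ Record.hasLit L l → ¬ Record.hasLit L (Lit.comp l) →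
      tlStep PL PR g t π (TLState.st L [] true)
        (TLState.st (L ++ [RElem.lit l true]) [] true)
  | cross (L : Record) : ¬ leftApp PL (g π) L →
      tlStep PL PR g t π (TLState.st L [] true) (TLState.st L [] false)
  | concludeR (L R : Record) : Record.incons R → Record.noDec R →
      tlStep PL PR g t π (TLState.st L R false) (TLState.ok L)
  | backtrackR (L R₁ : Record) (l : Lit) (R₂ : Record) :
      Record.incons (R₁ ++ RElem.lit l true :: R₂) → Record.noDec R₂ →
      tlStep PL PR g t π (TLState.st L (R₁ ++ RElem.lit l true :: R₂) false)
        (TLState.st L (R₁ ++ [RElem.lit (Lit.comp l) false]) false)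
  | propagateR (L R : Record) (l : Lit) :
      l ∈ pcOut PR (t π (Record.lits L)) (Record.lits R) →
      tlStep PL PR g t π (TLState.st L R false)
        (TLState.st L (R ++ [RElem.lit l false]) false)
  | decideR (L R : Record) (l : Lit) : ¬ Record.incons R →
      Lit.atom l ∈ progAtoms (t π (Record.lits L)) →
      ¬ Record.hasLit R l → ¬ Record.hasLit R (Lit.comp l) →
      tlStep PL PR g t π (TLState.st L R false)
        (TLState.st L (R ++ [RElem.lit l true]) false)
  | concludeRL (L R : Record) : ¬ rightApp PR (t π (Record.lits L)) R → Record.noDec L →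
      tlStep PL PR g t π (TLState.st L R false) TLState.fail
  | backtrackRL (L₁ : Record) (l : Lit) (L₂ R : Record) :
      ¬ rightApp PR (t π (Record.lits (L₁ ++ RElem.lit l true :: L₂))) R →
      Record.noDec L₂ →
      tlStep PL PR g t π (TLState.st (L₁ ++ RElem.lit l true :: L₂) R false)
        (TLState.st (L₁ ++ [RElem.lit (Lit.comp l) false]) [] true)

/-- The two-layer template graph `ST[PL, PR, g, t](π)`. -/
def TL (PL PR : Set PCond) (g : GenFun) (t : WitFun) (π : Prog) : AbsGraph TLState where
  nodes := {s | match s with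
    | TLState.st L R _ => Record.wf L ↑(progAtoms (g π)) ∧
        Record.wf R (witAtoms t π ↑(progAtoms (g π)))
    | TLState.ok L => Record.wf L ↑(progAtoms (g π))
    | TLState.fail => True}
  step := tlStep PL PR g t π
  init := TLState.st [] [] true
  fail := TLState.fail
  okP := fun s => ∃ L, s = TLState.ok L
  okLits := fun s => match s with
    | TLState.ok L => Record.lits L
    | TLState.st L _ _ => Record.lits L
    | TLState.fail => ∅

/-- The rule corresponding to a clause with positive atoms `P` and negated atoms `N`,
under the identification of CNF formulas with programs. -/
def mkClause (P N : Finset ℕ) : Rule := ⟨∅, N, P⟩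

def litsOver (X : Set ℕ) : Set Lit := {l | Lit.atom l ∈ X}

theorem litsOver_finite {X : Set ℕ} (hX : X.Finite) : (litsOver X).Finite := by
  apply ((hX.image Lit.pos).union (hX.image Lit.neg)).subset
  intro l hl
  cases l with
  | pos a => exact Or.inl ⟨a, hl, rfl⟩
  | neg a => exact Or.inr ⟨a, hl, rfl⟩

def elemsOver (X : Set ℕ) : Set RElem :=
  {e | ∀ l d, e = RElem.lit l d → Lit.atom l ∈ X}

theorem elemsOver_finite {X : Set ℕ} (hX : X.Finite) : (elemsOver X).Finite := by
  have h := litsOver_finite hX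
  apply (((h.image (fun l => RElem.lit l true)).union
    (h.image (fun l => RElem.lit l false))).union (Set.finite_singleton RElem.bot)).subset
  intro e he
  cases e with
  | bot => exact Or.inr rfl
  | lit l d =>
    have hl : l ∈ litsOver X := he l d rfl
    cases d
    · exact Or.inl (Or.inr ⟨l, hl, rfl⟩)
    · exact Or.inl (Or.inl ⟨l, hl, rfl⟩)

theorem wf_finite {X : Set ℕ} (hX : X.Finite) : {L : Record | Record.wf L X}.Finite := by
  have hS := elemsOver_finite hX
  have : Fintype (elemsOver X) := hS.fintype
  apply ((List.finite_length_le (elemsOver X) (Fintype.card (elemsOver X))).image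
    (List.map Subtype.val)).subset
  intro L hL
  have hmem : ∀ e ∈ L, e ∈ elemsOver X := by
    intro e he l d hd
    subst hd
    exact hL.2 l ⟨d, he⟩
  have hnd : L.Nodup := List.Nodup.of_map _ hL.1
  refine ⟨L.attachWith _ hmem, ?_, by simp⟩
  have : (L.attachWith _ hmem).Nodup := by
    apply List.Nodup.of_map Subtype.val
    simpa using hnd
  exact this.length_le_card

theorem witAtoms_finite (t : WitFun) (π : Prog) {X : Set ℕ} (hX : X.Finite) :
    (witAtoms t π X).Finite := by
  apply Set.Finite.biUnion
  · apply (litsOver_finite hX).finite_subsets.subset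
    rintro L ⟨-, h⟩ l hl
    have : Lit.atom l ∈ atomsOfSet L := ⟨l, hl, rfl⟩
    rw [h] at this
    exact this
  · intro L _
    exact Finset.finite_toSet _

theorem nodes_finite (Pg Pt : Set PCond) (g : GenFun) (t : WitFun) (π : Prog) :
    (TL Pg Pt g t π).nodes.Finite := by
  have h1 := wf_finite (Finset.finite_toSet (progAtoms (g π)))
  have h2 := wf_finite (witAtoms_finite t π (Finset.finite_toSet (progAtoms (g π))))
  apply (((((h1.prod h2).image (fun p => TLState.st p.1 p.2 true)).union
    ((h1.prod h2).image (fun p => TLState.st p.1 p.2 false))).union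
    (h1.image TLState.ok)).union (Set.finite_singleton TLState.fail)).subset
  intro s hs
  cases s with
  | fail => exact Or.inr rfl
  | ok L => exact Or.inl (Or.inr ⟨L, hs, rfl⟩)
  | st L R b =>
    cases b
    · exact Or.inl (Or.inl (Or.inr ⟨(L, R), hs, rfl⟩))
    · exact Or.inl (Or.inl (Or.inl ⟨(L, R), hs, rfl⟩))

def dig : RElem → ℕ
  | .lit _ true => 0
  | _ => 1

def digs (L : Record) : List ℕ := L.map dig

theorem digs_append (L : Record) (e : RElem) : digs L < digs (L ++ [e]) := by
  induction L with
  | nil => exact List.Lex.nil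
  | cons a L ih => exact List.Lex.cons ih

theorem digs_back (L₁ L₂ : Record) (l l' : Lit) :
    digs (L₁ ++ RElem.lit l true :: L₂) < digs (L₁ ++ [RElem.lit l' false]) := by
  induction L₁ with
  | nil => exact List.Lex.rel Nat.zero_lt_one
  | cons a L ih => exact List.Lex.cons ih

/-- Strictly increasing order on states. -/
def slt : TLState → TLState → Prop
  | .st L R b, .st L' R' b' => digs L < digs L' ∨
      (digs L = digs L' ∧ ((b = true ∧ b' = false) ∨ (b = b' ∧ digs R < digs R')))
  | .st _ _ _, _ => True
  | _, _ => False

theorem slt_trans {a b c : TLState} (h : slt a b) (h' : slt b c) : slt a c := by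
  cases a <;> cases b <;> cases c <;> simp only [slt] at h h' ⊢
  rename_i L R x L' R' x' L'' R'' x''
  rcases h with h | ⟨e, h⟩ <;> rcases h' with h' | ⟨e', h'⟩
  · exact Or.inl (h.trans h')
  · exact Or.inl (e' ▸ h)
  · exact Or.inl (e ▸ h')
  · refine Or.inr ⟨e.trans e', ?_⟩
    rcases h with ⟨h1, h2⟩ | ⟨h1, h2⟩ <;> rcases h' with ⟨h3, h4⟩ | ⟨h3, h4⟩
    · simp_all
    · simp_all
    · simp_all
    · exact Or.inr ⟨h1.trans h3, h2.trans h4⟩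

theorem slt_irrefl (a : TLState) : ¬ slt a a := by
  cases a <;> simp [slt]

theorem step_slt {Pg Pt : Set PCond} {g : GenFun} {t : WitFun} {π : Prog} {s s' : TLState}
    (h : tlStep Pg Pt g t π s s') : slt s s' := by
  cases h with
  | concludeL => trivial
  | backtrackL => exact Or.inl (digs_back _ _ _ _)
  | propagateL => exact Or.inl (digs_append _ _)
  | decideL => exact Or.inl (digs_append _ _)
  | cross => exact Or.inr ⟨rfl, Or.inl ⟨rfl, rfl⟩⟩
  | concludeR => trivial
  | backtrackR => exact Or.inr ⟨rfl, Or.inr ⟨rfl, digs_back _ _ _ _⟩⟩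
  | propagateR => exact Or.inr ⟨rfl, Or.inr ⟨rfl, digs_append _ _⟩⟩
  | decideR => exact Or.inr ⟨rfl, Or.inr ⟨rfl, digs_append _ _⟩⟩
  | concludeRL => trivial
  | backtrackRL => exact Or.inl (digs_back _ _ _ _)

/-- For any generating function `g`, witness function `t`, sets `Pg`, `Pt` of
p-conditions and program `π`, the two-layer template graph `ST[Pg, Pt, g, t](π)` is finite
and acyclic. -/
theorem statement18 (g : GenFun) (t : WitFun) (hg : isGenFun g) (ht : isWitFun t)
    (Pg Pt : Set PCond) (hpcg : ∀ p ∈ Pg, isPCondition p) (hpct : ∀ p ∈ Pt, isPCondition p)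
    (π : Prog) :
    (TL Pg Pt g t π).nodes.Finite ∧
    ∀ s, ¬ Relation.TransGen (TL Pg Pt g t π).edge s s := by
  refine ⟨nodes_finite Pg Pt g t π, ?_⟩
  have key : ∀ s s', Relation.TransGen (TL Pg Pt g t π).edge s s' → slt s s' := by
    intro s s' h
    induction h with
    | single h => exact step_slt h.2.2
    | tail _ h ih => exact slt_trans ih (step_slt h.2.2)
  exact fun s h => slt_irrefl s (key s s h)

end AbstractSolvers
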